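/- For every n ≥ 2 and every integer k with ⌈log_3(n/4)⌉ + 3 ≤ k ≤ n + 1, there exist positive integers a_1, a_2, …, a_n such that the palm G = S_n(a_1, a_2, …, a_n) satisfies χ_L(G) = k. -/

import Mathlib

open SimpleGraph

/-- Distance from a vertex to a set of vertices, `d(u,S) = min {d(u,v) : v ∈ S}`. -/
noncomputable def distToSet {V : Type*} (G : SimpleGraph V) (u : V) (S : Set V) : ℕ :=
  sInf (G.dist u '' S)

/-- `c` is a locating coloring of `G` with `k` colors: a proper coloring such that any two
distinct vertices are resolved by some color class. -/
def IsLocatingColoring {V : Type*} (G : SimpleGraph V) {k : ℕ} (c : V → Fin k) : Prop :=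
  (∀ u v : V, G.Adj u v → c u ≠ c v) ∧
  ∀ u v : V, u ≠ v →
    ∃ i : Fin k, distToSet G u (c ⁻¹' {i}) ≠ distToSet G v (c ⁻¹' {i})

/-- The locating chromatic number `χ_L(G)`: the least `k` admitting a locating `k`-coloring. -/
noncomputable def locatingChromaticNumber {V : Type*} (G : SimpleGraph V) : ℕ :=
  sInf {k : ℕ | ∃ c : V → Fin k, IsLocatingColoring G c}

/-- The vertex set of the palm `S_n(a_1, …, a_n)`: a hub `none` and, for each leg
`i : Fin n` (representing leg `i+1`), vertices `j : Fin (a (i+1))`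
(vertex `some ⟨i, j⟩` represents `a_{i+1, j+1}`). -/
def PalmVert (n : ℕ) (a : ℕ → ℕ) : Type :=
  Option ((i : Fin n) × Fin (a ((i : ℕ) + 1)))

/-- The palm `S_n(a_1, …, a_n)`: the star `K_{1,n}` whose `i`-th edge has been subdivided
`a_i - 1` times; the hub is joined to the first vertex of each leg, and consecutive
vertices along a leg are adjacent. -/
def Palm (n : ℕ) (a : ℕ → ℕ) : SimpleGraph (PalmVert n a) :=
  SimpleGraph.fromRel fun u v =>
    match u, v with
    | none, some ⟨_, j⟩ => (j : ℕ) = 0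
    | some ⟨i, j⟩, some ⟨i', j'⟩ => (i : ℕ) = (i' : ℕ) ∧ (j' : ℕ) = (j : ℕ) + 1
    | _, _ => False

/-!
Shorten the legs of a palm one after the other, from one common large length down to `1`. Shortening
a leg raises the locating chromatic number by at most one: keep the coloring of the longer palm and
give the new tip of the leg a new color. That color records the distance to the tip, and the removed
vertices only ever saw this distance. The last palm is a star, in which the hub is adjacent to all
other vertices and the leaves are pairwise twins, so it needs `n + 1` colors. A discrete
intermediate value argument then leaves only the first palm: if `n ≤ 4 * 3 ^ m` and all legs have
length at least `4 * m + 3`, then `m + 3` colors suffice. Each leg alternates between two of three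
base colors, in one of four ways, and each of the `m` extra colors marks one of two neighboring
vertices of the leg or none, which gives `4 * 3 ^ m` distinguishable legs.
-/

lemma exists_eq_of_succ_le_add_one {f : ℕ → ℕ} {n k : ℕ} (hf : ∀ s < n, f (s + 1) ≤ f s + 1)
    (h0 : f 0 ≤ k) (hn : k ≤ f n) : ∃ s, f s = k := by
  induction n with
  | zero => exact ⟨0, le_antisymm h0 hn⟩
  | succ n ih =>
    obtain hk | hk := le_or_gt k (f n)
    · exact ih (fun s hs => hf s (by omega)) hk
    · have := hf n (by omega)
      exact ⟨n + 1, by omega⟩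

section Distance

variable {V : Type*} {G : SimpleGraph V} {u : V} {f : V → ℕ}

lemma exists_walk_length_eq_of_descent (hu : f u = 0)
    (hdesc : ∀ v, v ≠ u → ∃ w, G.Adj w v ∧ f v = f w + 1) (v : V) :
    ∃ p : G.Walk u v, p.length = f v := by
  induction hd : f v generalizing v with
  | zero =>
    have hvu : v = u := by
      by_contra hne
      obtain ⟨w, -, hw⟩ := hdesc v hne
      omega
    subst hvu
    exact ⟨Walk.nil, rfl⟩
  | succ d ih =>
    obtain ⟨w, hadj, hw⟩ := hdesc v (by rintro rfl; omega)
    obtain ⟨p, hp⟩ := ih w (by omega)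
    exact ⟨p.concat hadj, by rw [Walk.length_concat, hp]⟩

lemma le_add_length_of_adj_le (hf : ∀ v w, G.Adj v w → f w ≤ f v + 1) {v w : V}
    (p : G.Walk v w) : f w ≤ f v + p.length := by
  induction p with
  | nil => simp
  | cons h p ih =>
    have := hf _ _ h
    rw [Walk.length_cons]
    omega

lemma dist_eq_of_descent (hu : f u = 0) (hf : ∀ v w, G.Adj v w → f w ≤ f v + 1)
    (hdesc : ∀ v, v ≠ u → ∃ w, G.Adj w v ∧ f v = f w + 1) (v : V) : G.dist u v = f v := by
  obtain ⟨p, hp⟩ := exists_walk_length_eq_of_descent hu hdesc v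
  obtain ⟨q, hq⟩ := p.reachable.exists_walk_length_eq_dist
  refine le_antisymm (hp ▸ dist_le p) ?_
  simpa [hu, hq] using le_add_length_of_adj_le hf q

end Distance

section ColorCode

variable {V W C : Type*} {G : SimpleGraph V} {H : SimpleGraph W} {c : V → C} {u v : V} {x : C}
  {d : ℕ}

lemma distToSet_image {φ : W → V} (hφ : ∀ u v, G.dist (φ u) (φ v) = H.dist u v) (u : W)
    (S : Set W) : distToSet G (φ u) (φ '' S) = distToSet H u S := by
  simp only [distToSet, Set.image_image, hφ]

lemma distToSet_union_congr {S T : Set V} (hS : distToSet G u S = distToSet G v S)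
    (hT : ∀ w ∈ T, G.dist u w = G.dist v w) :
    distToSet G u (S ∪ T) = distToSet G v (S ∪ T) := by
  unfold distToSet at hS ⊢
  rw [Set.image_union, Set.image_union, Set.image_congr hT]
  rcases S.eq_empty_or_nonempty with rfl | hSne
  · simp
  rcases T.eq_empty_or_nonempty with rfl | hTne
  · simpa using hS
  · rw [csInf_union (OrderBot.bddBelow _) (hSne.image _) (OrderBot.bddBelow _) (hTne.image _),
      csInf_union (OrderBot.bddBelow _) (hSne.image _) (OrderBot.bddBelow _) (hTne.image _), hS]

/-- The color code of a vertex `u`: its distances to the color classes of `c`. A proper coloring is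
locating exactly when distinct vertices have distinct color codes. The value at an unused color is
`0`. -/
noncomputable def colorCode (G : SimpleGraph V) (c : V → C) (u : V) (x : C) : ℕ :=
  distToSet G u (c ⁻¹' {x})

lemma colorCode_le (hv : c v = x) : colorCode G c u x ≤ G.dist u v :=
  Nat.sInf_le ⟨v, hv, rfl⟩

lemma le_colorCode (hv : c v = x) (h : ∀ w, c w = x → d ≤ G.dist u w) :
    d ≤ colorCode G c u x := by
  refine le_csInf ⟨_, v, hv, rfl⟩ ?_
  rintro _ ⟨w, hw, rfl⟩
  exact h w hw

lemma colorCode_eq (hv : c v = x) (hd : G.dist u v = d) (h : ∀ w, c w = x → d ≤ G.dist u w) :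
    colorCode G c u x = d :=
  le_antisymm (hd ▸ colorCode_le hv) (le_colorCode hv h)

lemma colorCode_eq_zero (hu : c u = x) : colorCode G c u x = 0 :=
  colorCode_eq hu dist_self fun _ _ => Nat.zero_le _

lemma colorCode_ne_zero (hG : G.Connected) (hv : c v = x) (hu : c u ≠ x) :
    colorCode G c u x ≠ 0 := by
  refine Nat.one_le_iff_ne_zero.1 (le_colorCode hv fun w hw => hG.pos_dist_of_ne ?_)
  rintro rfl
  exact hu hw

lemma colorCode_eq_one (hG : G.Connected) (huv : G.Adj u v) (hv : c v = x) (hu : c u ≠ x) :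
    colorCode G c u x = 1 :=
  le_antisymm ((colorCode_le hv).trans (dist_eq_one_iff_adj.2 huv).le)
    (Nat.one_le_iff_ne_zero.2 (colorCode_ne_zero hG hv hu))

lemma colorCode_eq_two (hG : G.Connected) (huv : G.dist u v = 2) (hv : c v = x) (hu : c u ≠ x)
    (hadj : ∀ w, G.Adj u w → c w ≠ x) : colorCode G c u x = 2 := by
  refine colorCode_eq hv huv fun w hw => hG.one_lt_dist_of_ne_of_not_adj ?_ fun h => hadj w h hw
  rintro rfl
  exact hu hw

end ColorCode

section LocatingColoring

variable {V W C : Type*} {G : SimpleGraph V} {H : SimpleGraph W} {k : ℕ}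

lemma isLocatingColoring_equiv_comp_iff (e : C ≃ Fin k) (c : V → C) :
    IsLocatingColoring G (e ∘ c) ↔
      (∀ u v, G.Adj u v → c u ≠ c v) ∧ Function.Injective (colorCode G c) := by
  have hclass (u : V) (x : C) : distToSet G u (e ∘ c ⁻¹' {e x}) = colorCode G c u x := by
    rw [colorCode]
    congr 1
    ext w
    simp
  refine and_congr (by simp) (forall₂_congr fun u v => ?_)
  simp only [← e.exists_congr_right, hclass, ne_eq, ← not_forall, ← funext_iff, not_imp_not]

lemma isLocatingColoring_iff {c : V → Fin k} :
    IsLocatingColoring G c ↔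
      (∀ u v, G.Adj u v → c u ≠ c v) ∧ Function.Injective (colorCode G c) :=
  isLocatingColoring_equiv_comp_iff (Equiv.refl _) c

lemma locatingChromaticNumber_le_card [Fintype C] (c : V → C)
    (hadj : ∀ u v, G.Adj u v → c u ≠ c v) (hcode : Function.Injective (colorCode G c)) :
    locatingChromaticNumber G ≤ Fintype.card C :=
  Nat.sInf_le ⟨_, (isLocatingColoring_equiv_comp_iff (Fintype.equivFin C) c).2 ⟨hadj, hcode⟩⟩

lemma exists_isLocatingColoring [Finite V] (hG : G.Connected) :
    ∃ c : V → Fin (locatingChromaticNumber G), IsLocatingColoring G c := by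
  refine Nat.sInf_mem (s := {k : ℕ | ∃ c : V → Fin k, IsLocatingColoring G c})
    ⟨_, _, (isLocatingColoring_equiv_comp_iff (Finite.equivFin V) id).2
      ⟨fun u v huv => huv.ne, fun u v huv => ?_⟩⟩
  by_contra hne
  refine colorCode_ne_zero (c := id) hG rfl hne ?_
  rw [huv, colorCode_eq_zero rfl]

lemma IsLocatingColoring.ne_of_dist_eq {c : V → Fin k} (hc : IsLocatingColoring G c) {u v : V}
    (huv : u ≠ v) (h : ∀ w, w ≠ u → w ≠ v → G.dist u w = G.dist v w) : c u ≠ c v := by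
  intro heq
  refine huv ((isLocatingColoring_iff.1 hc).2 (funext fun x => ?_))
  by_cases hx : c u = x
  · rw [colorCode_eq_zero hx, colorCode_eq_zero (heq ▸ hx)]
  · refine congrArg sInf (Set.image_congr fun w hw => h w ?_ ?_)
    · rintro rfl
      exact hx hw
    · rintro rfl
      exact hx (heq.trans hw)

lemma card_le_locatingChromaticNumber [Fintype V] (hG : G.Connected)
    (h : ∀ u v, u ≠ v → G.Adj u v ∨ ∀ w, w ≠ u → w ≠ v → G.dist u w = G.dist v w) :
    Fintype.card V ≤ locatingChromaticNumber G := by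
  obtain ⟨c, hc⟩ := exists_isLocatingColoring hG
  have hinj : Function.Injective c := fun u v huv => by
    by_contra hne
    rcases h u v hne with hadj | htwin
    · exact hc.1 u v hadj huv
    · exact hc.ne_of_dist_eq hne htwin huv
  simpa using Fintype.card_le_of_injective c hinj

/-- The coloring of `H` pulled back from `G` along `φ`, except that `y` receives the new color
`none`. -/
def recolorPoint [DecidableEq W] (c : V → C) (φ : W → V) (y : W) (w : W) : Option C :=
  if w = y then none else some (c (φ w))

-- The new color records the distance to `y`, and vertices with the same distance to `y` were never
-- told apart by the vertices outside the image of `φ`.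
lemma injective_colorCode_recolorPoint [DecidableEq W] {c : V → C}
    (hc : Function.Injective (colorCode G c)) (φ : W ↪ V)
    (hφ : ∀ u v, G.dist (φ u) (φ v) = H.dist u v) (y : W)
    (hy : ∀ x ∉ Set.range φ, ∀ u v, H.dist u y = H.dist v y → G.dist (φ u) x = G.dist (φ v) x) :
    Function.Injective (colorCode H (recolorPoint c φ y)) := by
  intro u v huv
  have hdist : H.dist u y = H.dist v y := by
    have hnone : recolorPoint c φ y ⁻¹' {none} = {y} := by
      ext w
      simp [recolorPoint]
    simpa [colorCode, hnone, distToSet] using congrFun huv none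
  refine φ.injective (hc (funext fun x => ?_))
  have hclass : c ⁻¹' {x} =
      φ '' (recolorPoint c φ y ⁻¹' {some x}) ∪ {z | c z = x ∧ (z = φ y ∨ z ∉ Set.range φ)} := by
    ext z
    by_cases hz : z ∈ Set.range φ
    · obtain ⟨w, rfl⟩ := hz
      by_cases hw : w = y <;> simp [recolorPoint, hw]
    · have hzφ (w : W) : φ w ≠ z := fun h => hz ⟨w, h⟩
      simp [hzφ]
  rw [colorCode, colorCode, hclass]
  refine distToSet_union_congr ?_ ?_
  · rw [distToSet_image hφ, distToSet_image hφ]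
    exact congrFun huv (some x)
  · rintro z ⟨-, rfl | hz⟩
    · rw [hφ, hφ, hdist]
    · exact hy z hz u v hdist

lemma locatingChromaticNumber_le_add_one [Finite V] (hG : G.Connected) (φ : W ↪ V)
    (hφ : ∀ u v, G.dist (φ u) (φ v) = H.dist u v) (y : W)
    (hy : ∀ x ∉ Set.range φ, ∀ u v, H.dist u y = H.dist v y → G.dist (φ u) x = G.dist (φ v) x) :
    locatingChromaticNumber H ≤ locatingChromaticNumber G + 1 := by
  classical
  obtain ⟨c, hc⟩ := exists_isLocatingColoring hG
  have hadj (u v : W) (huv : H.Adj u v) : recolorPoint c φ y u ≠ recolorPoint c φ y v := by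
    have hne : c (φ u) ≠ c (φ v) := hc.1 _ _ <| by
      rwa [← dist_eq_one_iff_adj, hφ, dist_eq_one_iff_adj]
    have := huv.ne
    grind [recolorPoint]
  simpa using locatingChromaticNumber_le_card _ hadj
    (injective_colorCode_recolorPoint (isLocatingColoring_iff.1 hc).2 φ hφ y hy)

end LocatingColoring

section PalmGraph

variable {n : ℕ} {a b : ℕ → ℕ}

namespace PalmVert

instance : Fintype (PalmVert n a) :=
  inferInstanceAs (Fintype (Option ((i : Fin n) × Fin (a ((i : ℕ) + 1)))))

/-- The hub `a_0` of a palm. -/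
def hub : PalmVert n a := none

/-- The vertex `a_{i+1,j+1}`, which lies on leg `i` at distance `j + 1` from the hub. -/
def leg (i : Fin n) (j : Fin (a ((i : ℕ) + 1))) : PalmVert n a := some ⟨i, j⟩

lemma eq_hub_or_eq_leg (u : PalmVert n a) : u = hub ∨ ∃ i j, u = leg i j := by
  rcases u with _ | ⟨i, j⟩
  · exact Or.inl rfl
  · exact Or.inr ⟨i, j, rfl⟩

@[simp]
lemma hub_ne_leg (i : Fin n) (j : Fin (a ((i : ℕ) + 1))) : (hub : PalmVert n a) ≠ leg i j :=
  (Option.some_ne_none _).symm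

@[simp]
lemma leg_eq_leg_iff {i i' : Fin n} {j : Fin (a ((i : ℕ) + 1))} {j' : Fin (a ((i' : ℕ) + 1))} :
    (leg i j : PalmVert n a) = leg i' j' ↔ i = i' ∧ (j : ℕ) = j' := by
  refine Option.some_inj.trans ?_
  constructor
  · rintro ⟨⟩
    exact ⟨rfl, rfl⟩
  · rintro ⟨rfl, hj⟩
    rw [Fin.ext hj]

lemma card_eq : Fintype.card (PalmVert n a) = ∑ i : Fin n, a (i + 1) + 1 :=
  Fintype.card_option.trans (by simp)

/-- The inclusion of a palm with shorter legs. -/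
def castLE (h : ∀ i : Fin n, b (i + 1) ≤ a (i + 1)) : PalmVert n b ↪ PalmVert n a where
  toFun := Option.map (Sigma.map id fun i => Fin.castLE (h i))
  inj' := Option.map_injective
    (Function.injective_id.sigma_map fun i => Fin.castLE_injective (h i))

@[simp]
lemma castLE_hub (h : ∀ i : Fin n, b (i + 1) ≤ a (i + 1)) : castLE h hub = hub := rfl

@[simp]
lemma castLE_leg (h : ∀ i : Fin n, b (i + 1) ≤ a (i + 1)) (i : Fin n)
    (j : Fin (b ((i : ℕ) + 1))) : castLE h (leg i j) = leg i (Fin.castLE (h i) j) := rfl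

end PalmVert

open PalmVert

namespace Palm

@[simp]
lemma adj_hub_leg {i : Fin n} {j : Fin (a ((i : ℕ) + 1))} :
    (Palm n a).Adj hub (leg i j) ↔ (j : ℕ) = 0 := by
  refine (fromRel_adj _ _ _).trans ⟨?_, fun h => ⟨hub_ne_leg i j, Or.inl h⟩⟩
  rintro ⟨-, h | h⟩
  · exact h
  · exact h.elim

@[simp]
lemma adj_leg_hub {i : Fin n} {j : Fin (a ((i : ℕ) + 1))} :
    (Palm n a).Adj (leg i j) hub ↔ (j : ℕ) = 0 := by
  rw [adj_comm, adj_hub_leg]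

@[simp]
lemma adj_leg_leg {i i' : Fin n} {j : Fin (a ((i : ℕ) + 1))} {j' : Fin (a ((i' : ℕ) + 1))} :
    (Palm n a).Adj (leg i j) (leg i' j') ↔ i = i' ∧ ((j' : ℕ) = j + 1 ∨ (j : ℕ) = j' + 1) := by
  refine (fromRel_adj _ _ _).trans ⟨?_, ?_⟩
  · rintro ⟨-, ⟨hi, hj⟩ | ⟨hi, hj⟩⟩
    · exact ⟨Fin.ext hi, Or.inl hj⟩
    · exact ⟨Fin.ext hi.symm, Or.inr hj⟩
  · rintro ⟨rfl, h⟩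
    refine ⟨fun heq => ?_, h.imp (fun h => ⟨rfl, h⟩) fun h => ⟨rfl, h⟩⟩
    have := (leg_eq_leg_iff.1 heq).2
    omega

/-- The distance function of a palm in closed form: two vertices on different legs are joined
through the hub. -/
def closedDist : PalmVert n a → PalmVert n a → ℕ
  | none, none => 0
  | none, some y => y.2 + 1
  | some x, none => x.2 + 1
  | some x, some y => if x.1 = y.1 then Nat.dist x.2 y.2 else x.2 + y.2 + 2

@[simp]
lemma closedDist_hub_hub : closedDist (hub : PalmVert n a) hub = 0 := rfl

@[simp]
lemma closedDist_hub_leg (i : Fin n) (j : Fin (a ((i : ℕ) + 1))) :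
    closedDist hub (leg i j) = j + 1 := rfl

@[simp]
lemma closedDist_leg_hub (i : Fin n) (j : Fin (a ((i : ℕ) + 1))) :
    closedDist (leg i j) hub = j + 1 := rfl

@[simp]
lemma closedDist_leg_leg (i i' : Fin n) (j : Fin (a ((i : ℕ) + 1)))
    (j' : Fin (a ((i' : ℕ) + 1))) :
    closedDist (leg i j) (leg i' j') = if i = i' then Nat.dist j j' else j + j' + 2 := rfl

lemma closedDist_self (u : PalmVert n a) : closedDist u u = 0 := by
  obtain rfl | ⟨i, j, rfl⟩ := u.eq_hub_or_eq_leg <;> simp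

lemma closedDist_le_of_adj (u : PalmVert n a) {v w : PalmVert n a} (h : (Palm n a).Adj v w) :
    closedDist u w ≤ closedDist u v + 1 := by
  obtain rfl | ⟨i, j, rfl⟩ := u.eq_hub_or_eq_leg <;>
  obtain rfl | ⟨i', j', rfl⟩ := v.eq_hub_or_eq_leg <;>
  obtain rfl | ⟨i'', j'', rfl⟩ := w.eq_hub_or_eq_leg <;>
  simp only [SimpleGraph.irrefl, adj_hub_leg, adj_leg_hub, adj_leg_leg] at h <;>
  simp only [closedDist_hub_hub, closedDist_hub_leg, closedDist_leg_hub, closedDist_leg_leg,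
    Nat.dist] <;>
  grind

-- The neighbor of `v` towards `u` is the next vertex outwards on the leg of `u` if this leg goes
-- through or starts at `v`, and the next vertex towards the hub otherwise.
lemma exists_adj_closedDist_eq {u v : PalmVert n a} (huv : v ≠ u) :
    ∃ w, (Palm n a).Adj w v ∧ closedDist u v = closedDist u w + 1 := by
  obtain rfl | ⟨i, j, rfl⟩ := u.eq_hub_or_eq_leg <;>
  obtain rfl | ⟨i', ⟨j', hj'⟩, rfl⟩ := v.eq_hub_or_eq_leg
  · exact absurd rfl huv
  · rcases j' with _ | j'
    · exact ⟨hub, by simp⟩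
    · exact ⟨leg i' ⟨j', by omega⟩, by simp⟩
  · exact ⟨leg i ⟨0, j.pos⟩, by simp [Nat.dist]⟩
  · by_cases hout : i = i' ∧ j' < j
    · obtain ⟨rfl, hlt⟩ := hout
      refine ⟨leg i ⟨j' + 1, by omega⟩, by simp, ?_⟩
      simp only [closedDist_leg_leg, Nat.dist, if_true]
      omega
    · have hne : ¬ (i' = i ∧ j' = j) := by simpa using huv
      rcases j' with _ | j'
      · refine ⟨hub, by simp, ?_⟩
        simp only [closedDist_leg_leg, closedDist_leg_hub]
        grind
      · refine ⟨leg i' ⟨j', by omega⟩, by simp, ?_⟩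
        simp only [closedDist_leg_leg, Nat.dist]
        grind

lemma dist_eq_closedDist (u v : PalmVert n a) : (Palm n a).dist u v = closedDist u v :=
  dist_eq_of_descent (closedDist_self u) (fun _ _ => closedDist_le_of_adj u)
    (fun _ => exists_adj_closedDist_eq) v

lemma connected : (Palm n a).Connected := by
  refine (connected_iff_exists_forall_reachable _).2 ⟨hub, fun v => ?_⟩
  obtain ⟨p, -⟩ := exists_walk_length_eq_of_descent (closedDist_self hub)
    (fun _ => exists_adj_closedDist_eq) v
  exact p.reachable

@[simp]
lemma dist_hub_leg (i : Fin n) (j : Fin (a ((i : ℕ) + 1))) :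
    (Palm n a).dist hub (leg i j) = j + 1 :=
  dist_eq_closedDist _ _

@[simp]
lemma dist_leg_hub (i : Fin n) (j : Fin (a ((i : ℕ) + 1))) :
    (Palm n a).dist (leg i j) hub = j + 1 :=
  dist_eq_closedDist _ _

@[simp]
lemma dist_leg_leg (i i' : Fin n) (j : Fin (a ((i : ℕ) + 1))) (j' : Fin (a ((i' : ℕ) + 1))) :
    (Palm n a).dist (leg i j) (leg i' j') = if i = i' then Nat.dist j j' else j + j' + 2 :=
  dist_eq_closedDist _ _

lemma dist_castLE (h : ∀ i : Fin n, b (i + 1) ≤ a (i + 1)) (u v : PalmVert n b) :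
    (Palm n a).dist (castLE h u) (castLE h v) = (Palm n b).dist u v := by
  obtain rfl | ⟨i, j, rfl⟩ := u.eq_hub_or_eq_leg <;>
  obtain rfl | ⟨i', j', rfl⟩ := v.eq_hub_or_eq_leg <;> simp

lemma locatingChromaticNumber_le_add_one_of_shorten (r : Fin n) (hr : 1 ≤ b (r + 1))
    (hra : b (r + 1) ≤ a (r + 1)) (hab : ∀ i, i ≠ r → b (i + 1) = a (i + 1)) :
    locatingChromaticNumber (Palm n b) ≤ locatingChromaticNumber (Palm n a) + 1 := by
  have hle (i : Fin n) : b (i + 1) ≤ a (i + 1) := by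
    obtain rfl | hi := eq_or_ne i r
    · exact hra
    · exact (hab i hi).le
  let tip : PalmVert n b := leg r ⟨b (r + 1) - 1, by omega⟩
  refine locatingChromaticNumber_le_add_one connected (castLE hle) (dist_castLE hle) tip
    fun x hx u v huv => ?_
  have hcut : ∃ j : Fin (a (r + 1)), b (r + 1) ≤ j ∧ x = leg r j := by
    obtain rfl | ⟨i, j, rfl⟩ := x.eq_hub_or_eq_leg
    · exact absurd ⟨hub, rfl⟩ hx
    · have hj : b (i + 1) ≤ j := by
        by_contra! hj
        exact hx ⟨leg i ⟨j, hj⟩, rfl⟩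
      obtain rfl : i = r := by
        by_contra hi
        have := hab i hi
        omega
      exact ⟨j, hj, rfl⟩
  obtain ⟨j, hj, rfl⟩ := hcut
  have hdist (w : PalmVert n b) : (Palm n a).dist (castLE hle w) (leg r j) =
      (Palm n b).dist w tip + (j + 1 - b (r + 1)) := by
    obtain rfl | ⟨i, l, rfl⟩ := w.eq_hub_or_eq_leg
    · simp only [tip, castLE_hub, dist_hub_leg]
      omega
    · obtain rfl | hi := eq_or_ne i r
      · simp only [tip, castLE_leg, dist_leg_leg, if_true, Fin.val_castLE, Nat.dist]
        omega
      · simp only [tip, castLE_leg, dist_leg_leg, if_neg hi, Fin.val_castLE]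
        omega
  rw [hdist, hdist, huv]

lemma add_one_le_locatingChromaticNumber_of_star (ha : ∀ i : Fin n, a (i + 1) = 1) :
    n + 1 ≤ locatingChromaticNumber (Palm n a) := by
  have hcard : Fintype.card (PalmVert n a) = n + 1 := by simp [card_eq, ha]
  have hzero {i : Fin n} (j : Fin (a (i + 1))) : (j : ℕ) = 0 := by
    have := ha i
    omega
  rw [← hcard]
  refine card_le_locatingChromaticNumber connected fun u v huv => ?_
  obtain rfl | ⟨i, j, rfl⟩ := u.eq_hub_or_eq_leg <;>
  obtain rfl | ⟨i', j', rfl⟩ := v.eq_hub_or_eq_leg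
  · exact absurd rfl huv
  · exact Or.inl (adj_hub_leg.2 (hzero j'))
  · exact Or.inl (adj_leg_hub.2 (hzero j))
  · refine Or.inr fun w hwu hwv => ?_
    obtain rfl | ⟨i'', j'', rfl⟩ := w.eq_hub_or_eq_leg
    · simp [hzero]
    · simp only [ne_eq, leg_eq_leg_iff, hzero, and_true] at hwu hwv
      simp [hzero, Ne.symm hwu, Ne.symm hwv]

end Palm

end PalmGraph

section LegColor

variable {m : ℕ} {t t' : Fin 4} {δ : Fin m → Fin 3} {p p' : ℕ} {q : Fin m}

/-- The base color at odd distances from the hub on a leg of the given type; the four types are the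
alternating patterns `10…`, `20…`, `12…` and `21…`, read away from the hub. -/
def oddColor : Fin 4 → Fin 3 := ![1, 2, 1, 2]

/-- The base color at even distances from the hub on a leg of the given type. -/
def evenColor : Fin 4 → Fin 3 := ![0, 0, 2, 1]

/-- The base color that does not occur on legs of the given type. -/
def missingColor : Fin 4 → Fin 3 := ![2, 1, 0, 0]

/-- The base color at distance `p` from the hub on a leg of type `t`. -/
def baseColor (t : Fin 4) (p : ℕ) : Fin 3 := if Odd p then oddColor t else evenColor t

lemma oddColor_ne_zero : oddColor t ≠ 0 := by
  revert t
  decide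

lemma oddColor_ne_missingColor : oddColor t ≠ missingColor t := by
  revert t
  decide

lemma baseColor_add_two : baseColor t (p + 2) = baseColor t p := by
  simp [baseColor, Nat.odd_add]

lemma baseColor_succ_ne : baseColor t (p + 1) ≠ baseColor t p := by
  have h : oddColor t ≠ evenColor t := by
    revert t
    decide
  by_cases hp : Odd p
  · simpa [baseColor, hp, Nat.odd_add_one] using h.symm
  · simpa [baseColor, hp, Nat.odd_add_one] using h

lemma ne_missingColor_iff {x : Fin 3} :
    x ≠ missingColor t ↔ x = baseColor t p ∨ x = baseColor t (p + 1) := by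
  have h : x ≠ missingColor t ↔ x = oddColor t ∨ x = evenColor t := by
    revert t x
    decide
  rw [h]
  by_cases hp : Odd p
  · simp [baseColor, hp, Nat.odd_add_one]
  · simp [baseColor, hp, Nat.odd_add_one, or_comm]

lemma eq_of_missingColor_eq_of_baseColor_eq (hm : missingColor t = missingColor t')
    (hb : baseColor t p = baseColor t' p) : t = t' := by
  unfold baseColor at hb
  split_ifs at hb
  · revert t t'
    decide
  · revert t t'
    decide

lemma baseColor_ne_missingColor : baseColor t p ≠ missingColor t :=
  ne_missingColor_iff.2 (Or.inl rfl)

/-- On a leg with digits `δ`, the digit `δ q` is recorded by the extra color `q`, which marks the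
vertex at distance `4 * (q + 1) + δ q` from the hub if `δ q` is `0` or `1`, and no vertex if `δ q`
is `2`. -/
def IsMarkedBy (δ : Fin m → Fin 3) (p : ℕ) (q : Fin m) : Prop :=
  (δ q : ℕ) < 2 ∧ p = 4 * (q + 1) + δ q

/-- The vertex at distance `p` from the hub carries an extra color. -/
def IsMarked (δ : Fin m → Fin 3) (p : ℕ) : Prop := ∃ q, IsMarkedBy δ p q

lemma IsMarkedBy.eq {q' : Fin m} (h : IsMarkedBy δ p q) (h' : IsMarkedBy δ p q') : q = q' := by
  obtain ⟨hδ, hp⟩ := h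
  obtain ⟨hδ', hp'⟩ := h'
  omega

lemma IsMarked.four_le (h : IsMarked δ p) : 4 ≤ p := by
  obtain ⟨q, -, hp⟩ := h
  omega

lemma IsMarked.le (h : IsMarked δ p) : p ≤ 4 * m + 1 := by
  obtain ⟨q, hδ, hp⟩ := h
  omega

-- Consecutive marks are at distance at least `3`, so a marked vertex has base colors at distances
-- `1` and `2` on both sides.
lemma IsMarked.not_isMarked (h : IsMarked δ p) (hne : p ≠ p') (h₁ : p ≤ p' + 2)
    (h₂ : p' ≤ p + 2) : ¬ IsMarked δ p' := by
  rintro ⟨q', hδ', hp'⟩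
  obtain ⟨q, hδ, hp⟩ := h
  obtain rfl | hq := eq_or_ne q q'
  · omega
  · have := Fin.val_ne_of_ne hq
    omega

open Classical in
/-- The color at distance `p` from the hub on a leg of type `t` with digits `δ`: one of three base
colors or one of `m` extra colors. -/
noncomputable def legColor (t : Fin 4) (δ : Fin m → Fin 3) (p : ℕ) : Fin 3 ⊕ Fin m :=
  if h : IsMarked δ p then .inr h.choose else .inl (baseColor t p)

lemma legColor_eq_inr_iff : legColor t δ p = .inr q ↔ IsMarkedBy δ p q := by
  unfold legColor
  split_ifs with h
  · rw [Sum.inr.injEq]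
    exact ⟨fun hq => hq ▸ h.choose_spec, h.choose_spec.eq⟩
  · simpa using fun hq => h ⟨q, hq⟩

lemma legColor_eq_inl_iff {x : Fin 3} :
    legColor t δ p = .inl x ↔ ¬ IsMarked δ p ∧ baseColor t p = x := by
  unfold legColor
  split_ifs with h <;> simp [h]

lemma legColor_succ_ne : legColor t δ (p + 1) ≠ legColor t δ p := by
  intro heq
  rcases hp : legColor t δ p with x | q
  · rw [hp, legColor_eq_inl_iff] at heq
    exact baseColor_succ_ne (heq.2.trans (legColor_eq_inl_iff.1 hp).2.symm)
  · rw [hp, legColor_eq_inr_iff] at heq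
    have : p + 1 = p := heq.2.trans (legColor_eq_inr_iff.1 hp).2.symm
    omega

end LegColor

section PalmColoring

open PalmVert

variable {n m : ℕ} {a : ℕ → ℕ} {t : Fin n → Fin 4} {δ : Fin n → Fin m → Fin 3}

/-- The coloring of a palm whose leg `i` has type `t i` and digits `δ i`. -/
noncomputable def palmColoring (t : Fin n → Fin 4) (δ : Fin n → Fin m → Fin 3) :
    PalmVert n a → Fin 3 ⊕ Fin m
  | none => .inl 0
  | some ⟨i, j⟩ => legColor (t i) (δ i) (j + 1)

@[simp]
lemma palmColoring_hub : palmColoring t δ (hub : PalmVert n a) = .inl 0 := rfl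

@[simp]
lemma palmColoring_leg (i : Fin n) (j : Fin (a (i + 1))) :
    palmColoring t δ (leg i j) = legColor (t i) (δ i) (j + 1) := rfl

lemma palmColoring_leg_of_eq_zero {i : Fin n} {j : Fin (a (i + 1))} (hj : (j : ℕ) = 0) :
    palmColoring t δ (leg i j) = .inl (oddColor (t i)) := by
  rw [palmColoring_leg, hj, legColor_eq_inl_iff]
  exact ⟨fun h => absurd h.four_le (by simp), rfl⟩

lemma palmColoring_ne_of_adj {u v : PalmVert n a} (h : (Palm n a).Adj u v) :
    palmColoring t δ u ≠ palmColoring t δ v := by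
  wlog hle : (Palm n a).dist hub u ≤ (Palm n a).dist hub v generalizing u v
  · exact (this h.symm (le_of_not_ge hle)).symm
  obtain rfl | ⟨i, j, rfl⟩ := u.eq_hub_or_eq_leg <;>
  obtain rfl | ⟨i', j', rfl⟩ := v.eq_hub_or_eq_leg
  · exact absurd rfl h.ne
  · rw [palmColoring_hub, palmColoring_leg_of_eq_zero (Palm.adj_hub_leg.1 h), ne_eq,
      Sum.inl.injEq]
    exact oddColor_ne_zero.symm
  · simp at hle
  · obtain ⟨rfl, hj | hj⟩ := Palm.adj_leg_leg.1 h
    · rw [palmColoring_leg, palmColoring_leg, hj]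
      exact legColor_succ_ne.symm
    · simp [hj] at hle

local notation "code" => colorCode (Palm n a) (palmColoring t δ)

lemma colorCode_hub_inl (ha : ∀ i : Fin n, 0 < a (i + 1)) (ht : ∀ x ≠ 0, ∃ i, oddColor (t i) = x)
    (x : Fin 3) : code hub (.inl x) = if x = 0 then 0 else 1 := by
  split_ifs with hx
  · exact colorCode_eq_zero (by simp [hx])
  · obtain ⟨i, rfl⟩ := ht x hx
    exact colorCode_eq_one Palm.connected (v := leg i ⟨0, ha i⟩) (by simp)
      (palmColoring_leg_of_eq_zero rfl) (by simpa using Ne.symm hx)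

lemma exists_adj_palmColoring_eq (ha : ∀ i : Fin n, 4 * m + 3 ≤ a (i + 1)) (i : Fin n)
    (j : Fin (a (i + 1))) :
    ∃ v, (Palm n a).Adj (leg i j) v ∧ palmColoring t δ v = .inl (baseColor (t i) (j + 2)) := by
  have hai := ha i
  by_cases hprev : 1 ≤ (j : ℕ) ∧ ¬ IsMarked (δ i) j
  · refine ⟨leg i ⟨j - 1, by omega⟩, ?_, ?_⟩
    · simpa using by omega
    · rw [palmColoring_leg, legColor_eq_inl_iff, baseColor_add_two]
      simp [Nat.sub_add_cancel hprev.1, hprev.2]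
  · obtain ⟨hlt, hnext⟩ : (j : ℕ) + 1 < a (i + 1) ∧ ¬ IsMarked (δ i) (j + 2) := by
      by_cases h : IsMarked (δ i) j
      · have := h.le
        exact ⟨by omega, h.not_isMarked (by omega) (by omega) (by omega)⟩
      · have hj : (j : ℕ) = 0 := by
          by_contra hj
          exact hprev ⟨by omega, h⟩
        exact ⟨by omega, fun h => by have := h.four_le; omega⟩
    exact ⟨leg i ⟨j + 1, hlt⟩, by simp, legColor_eq_inl_iff.2 ⟨hnext, rfl⟩⟩

lemma colorCode_baseColor_succ (ha : ∀ i : Fin n, 4 * m + 3 ≤ a (i + 1)) (i : Fin n)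
    (j : Fin (a (i + 1))) : code (leg i j) (.inl (baseColor (t i) (j + 2))) = 1 := by
  obtain ⟨v, hadj, hv⟩ := exists_adj_palmColoring_eq (t := t) (δ := δ) ha i j
  refine colorCode_eq_one Palm.connected hadj hv fun h => ?_
  exact baseColor_succ_ne (legColor_eq_inl_iff.1 h).2.symm

lemma colorCode_baseColor_of_isMarked {i : Fin n} {j : Fin (a (i + 1))}
    (h : IsMarked (δ i) (j + 1)) : code (leg i j) (.inl (baseColor (t i) (j + 1))) = 2 := by
  obtain ⟨l, hl⟩ : ∃ l, (j : ℕ) = l + 2 := ⟨j - 2, by have := h.four_le; omega⟩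
  refine colorCode_eq_two Palm.connected (v := leg i ⟨l, by omega⟩) ?_ ?_ ?_ ?_
  · simp [hl, Nat.dist]
  · rw [palmColoring_leg, legColor_eq_inl_iff, hl, ← baseColor_add_two]
    exact ⟨h.not_isMarked (by simp [hl]) (by simp [hl]) (by simp [hl]), rfl⟩
  · rw [palmColoring_leg, ne_eq, legColor_eq_inl_iff]
    exact fun hj => hj.1 h
  · intro w hw hcol
    obtain rfl | ⟨i', j', rfl⟩ := w.eq_hub_or_eq_leg
    · have := Palm.adj_leg_hub.1 hw
      omega
    · obtain ⟨rfl, hj' | hj'⟩ := Palm.adj_leg_leg.1 hw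
      · rw [palmColoring_leg, legColor_eq_inl_iff, hj'] at hcol
        exact baseColor_succ_ne hcol.2
      · rw [palmColoring_leg, legColor_eq_inl_iff, hj'] at hcol
        exact baseColor_succ_ne hcol.2.symm

lemma colorCode_baseColor_of_not_isMarked {i : Fin n} {j : Fin (a (i + 1))}
    (h : ¬ IsMarked (δ i) (j + 1)) : code (leg i j) (.inl (baseColor (t i) (j + 1))) = 0 :=
  colorCode_eq_zero (legColor_eq_inl_iff.2 ⟨h, rfl⟩)

lemma colorCode_baseColor_ne_one (i : Fin n) (j : Fin (a (i + 1))) :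
    code (leg i j) (.inl (baseColor (t i) (j + 1))) ≠ 1 := by
  by_cases h : IsMarked (δ i) (j + 1)
  · simp [colorCode_baseColor_of_isMarked h]
  · simp [colorCode_baseColor_of_not_isMarked h]

lemma colorCode_le_of_ne_missingColor (ha : ∀ i : Fin n, 4 * m + 3 ≤ a (i + 1)) {i : Fin n}
    (j : Fin (a (i + 1))) {x : Fin 3} (hx : x ≠ missingColor (t i)) :
    code (leg i j) (.inl x) ≤ if (j : ℕ) < 3 then 1 else 2 := by
  obtain rfl | rfl := (ne_missingColor_iff (p := j + 1)).1 hx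
  · by_cases h : IsMarked (δ i) (j + 1)
    · have := h.four_le
      rw [colorCode_baseColor_of_isMarked h, if_neg (by omega)]
    · rw [colorCode_baseColor_of_not_isMarked h]
      exact Nat.zero_le _
  · rw [colorCode_baseColor_succ ha]
    split_ifs <;> omega

lemma colorCode_missingColor (ha : ∀ i : Fin n, 0 < a (i + 1))
    (ht : ∀ x ≠ 0, ∃ i, oddColor (t i) = x) (i : Fin n) (j : Fin (a (i + 1))) :
    code (leg i j) (.inl (missingColor (t i))) =
      if missingColor (t i) = 0 then (j : ℕ) + 1 else j + 2 := by
  have hleg (i' : Fin n) (j' : Fin (a (i' + 1)))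
      (h : palmColoring t δ (leg i' j') = .inl (missingColor (t i))) :
      (j : ℕ) + 2 ≤ (Palm n a).dist (leg i j) (leg i' j') := by
    have hne : i ≠ i' := by
      rintro rfl
      exact baseColor_ne_missingColor (legColor_eq_inl_iff.1 h).2
    rw [Palm.dist_leg_leg, if_neg hne]
    omega
  split_ifs with h0
  · refine colorCode_eq (v := hub) (by simp [h0]) (by simp) fun w hw => ?_
    obtain rfl | ⟨i', j', rfl⟩ := w.eq_hub_or_eq_leg
    · simp
    · exact (Nat.le_succ _).trans (hleg i' j' hw)
  · obtain ⟨i', hi'⟩ := ht _ h0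
    have hne : i ≠ i' := by
      rintro rfl
      exact oddColor_ne_missingColor hi'
    refine colorCode_eq (v := leg i' ⟨0, ha i'⟩) ?_ (by simp [hne]) fun w hw => ?_
    · rw [palmColoring_leg_of_eq_zero rfl, hi']
    · obtain rfl | ⟨r, l, rfl⟩ := w.eq_hub_or_eq_leg
      · exact absurd (Sum.inl_injective hw).symm h0
      · exact hleg r l hw

-- A base color occurring on a leg is within distance `2`, and within distance `1` before the first
-- mark, whereas the missing color is at least as far as the hub.
lemma missingColor_eq_of_colorCode_eq (ha : ∀ i : Fin n, 4 * m + 3 ≤ a (i + 1))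
    (ht : ∀ x ≠ 0, ∃ i, oddColor (t i) = x) {i i' : Fin n} {j : Fin (a (i + 1))}
    {j' : Fin (a (i' + 1))} (h : ∀ x : Fin 3, code (leg i j) (.inl x) = code (leg i' j') (.inl x)) :
    missingColor (t i) = missingColor (t i') := by
  have hpos (i : Fin n) : 0 < a (i + 1) := (Nat.succ_pos _).trans_le (ha i)
  by_contra hne
  have hi := h (missingColor (t i))
  have hi' := h (missingColor (t i'))
  rw [colorCode_missingColor hpos ht] at hi hi'
  have hle := colorCode_le_of_ne_missingColor (δ := δ) ha j' hne
  have hle' := colorCode_le_of_ne_missingColor (δ := δ) ha j (Ne.symm hne)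
  grind

lemma type_eq_and_val_eq_of_colorCode_eq (ha : ∀ i : Fin n, 4 * m + 3 ≤ a (i + 1))
    (ht : ∀ x ≠ 0, ∃ i, oddColor (t i) = x) {i i' : Fin n} {j : Fin (a (i + 1))}
    {j' : Fin (a (i' + 1))} (h : ∀ x : Fin 3, code (leg i j) (.inl x) = code (leg i' j') (.inl x)) :
    t i = t i' ∧ (j : ℕ) = j' := by
  have hpos (i : Fin n) : 0 < a (i + 1) := (Nat.succ_pos _).trans_le (ha i)
  have hmissing := missingColor_eq_of_colorCode_eq ha ht h
  have hj : (j : ℕ) = j' := by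
    have hcode := h (missingColor (t i))
    rw [colorCode_missingColor hpos ht, hmissing, colorCode_missingColor hpos ht] at hcode
    split_ifs at hcode <;> omega
  have hbase : baseColor (t i) (j + 2) = baseColor (t i') (j' + 2) := by
    have hcode := (h _).symm.trans (colorCode_baseColor_succ (t := t) (δ := δ) ha i j)
    have hne : baseColor (t i) (j + 2) ≠ missingColor (t i') :=
      hmissing ▸ baseColor_ne_missingColor
    refine ((ne_missingColor_iff (p := j' + 1)).1 hne).resolve_left fun heq => ?_
    rw [heq] at hcode
    exact colorCode_baseColor_ne_one i' j' hcode
  exact ⟨eq_of_missingColor_eq_of_baseColor_eq hmissing (hj ▸ hbase), hj⟩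

lemma exists_palmColoring_eq_inr (ha : ∀ i : Fin n, 4 * m + 3 ≤ a (i + 1)) {i : Fin n} {q : Fin m}
    (hδ : (δ i q : ℕ) < 2) : ∃ j : Fin (a (i + 1)), (j : ℕ) + 1 = 4 * (q + 1) + δ i q ∧
      palmColoring t δ (leg i j) = .inr q := by
  have hai := ha i
  exact ⟨⟨4 * q + 3 + δ i q, by omega⟩, by dsimp only; omega,
    legColor_eq_inr_iff.2 ⟨hδ, by dsimp only; omega⟩⟩

lemma exists_leg_of_palmColoring_eq_inr {w : PalmVert n a} {q : Fin m}
    (hw : palmColoring t δ w = .inr q) :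
    ∃ i j, w = leg i j ∧ (δ i q : ℕ) < 2 ∧ (j : ℕ) + 1 = 4 * (q + 1) + δ i q := by
  obtain rfl | ⟨i, j, rfl⟩ := w.eq_hub_or_eq_leg
  · simp at hw
  · exact ⟨i, j, rfl, legColor_eq_inr_iff.1 hw⟩

lemma colorCode_inr_of_lt_two (ha : ∀ i : Fin n, 4 * m + 3 ≤ a (i + 1)) {i : Fin n}
    (j : Fin (a (i + 1))) {q : Fin m} (hδ : (δ i q : ℕ) < 2) :
    code (leg i j) (.inr q) = Nat.dist (j + 1) (4 * (q + 1) + δ i q) := by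
  obtain ⟨l, hl, hcol⟩ := exists_palmColoring_eq_inr (t := t) ha hδ
  refine colorCode_eq hcol (by simp [← hl, Nat.dist]) fun w hw => ?_
  obtain ⟨i', j', rfl, -, hj'⟩ := exists_leg_of_palmColoring_eq_inr hw
  rw [Palm.dist_leg_leg]
  split_ifs with hi
  · subst hi
    simp [← hj', Nat.dist]
  · unfold Nat.dist
    omega

lemma le_colorCode_inr_of_eq_two (ha : ∀ i : Fin n, 4 * m + 3 ≤ a (i + 1)) {i i' : Fin n}
    (j : Fin (a (i + 1))) {q : Fin m} (hδ : (δ i q : ℕ) = 2) (hδ' : (δ i' q : ℕ) < 2) :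
    (j : ℕ) + 1 + 4 * (q + 1) ≤ code (leg i j) (.inr q) := by
  obtain ⟨l, -, hcol⟩ := exists_palmColoring_eq_inr (t := t) ha hδ'
  refine le_colorCode hcol fun w hw => ?_
  obtain ⟨i'', j'', rfl, hlt, hj''⟩ := exists_leg_of_palmColoring_eq_inr hw
  have hne : i ≠ i'' := by
    rintro rfl
    omega
  rw [Palm.dist_leg_leg, if_neg hne]
  omega

lemma digit_eq_of_colorCode_eq (ha : ∀ i : Fin n, 4 * m + 3 ≤ a (i + 1)) {i i' : Fin n}
    {j : Fin (a (i + 1))} {j' : Fin (a (i' + 1))} (hj : (j : ℕ) = j') {q : Fin m}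
    (h : code (leg i j) (.inr q) = code (leg i' j') (.inr q)) : δ i q = δ i' q := by
  wlog hle : (δ i q : ℕ) ≤ δ i' q generalizing i i'
  · exact (this hj.symm h.symm (le_of_not_ge hle)).symm
  by_contra hne
  have hlt : (δ i q : ℕ) < δ i' q := hle.lt_of_ne (Fin.val_ne_of_ne hne)
  rw [colorCode_inr_of_lt_two ha j (by omega)] at h
  obtain hδ' | hδ' : (δ i' q : ℕ) < 2 ∨ (δ i' q : ℕ) = 2 := by omega
  · rw [colorCode_inr_of_lt_two ha j' hδ'] at h
    unfold Nat.dist at h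
    omega
  · have hfar := le_colorCode_inr_of_eq_two (t := t) ha j' hδ' (i' := i) (by omega)
    unfold Nat.dist at h
    omega

lemma colorCode_hub_ne_colorCode_leg (ha : ∀ i : Fin n, 0 < a (i + 1))
    (ht : ∀ x ≠ 0, ∃ i, oddColor (t i) = x) (i : Fin n) (j : Fin (a (i + 1))) :
    code hub ≠ code (leg i j) := by
  intro h
  have hcode := congrFun h (.inl (missingColor (t i)))
  rw [colorCode_hub_inl ha ht, colorCode_missingColor ha ht] at hcode
  split_ifs at hcode
  omega

lemma injective_colorCode_palmColoring (ha : ∀ i : Fin n, 4 * m + 3 ≤ a (i + 1))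
    (ht : ∀ x ≠ 0, ∃ i, oddColor (t i) = x) (hinj : Function.Injective fun i => (t i, δ i)) :
    Function.Injective code := by
  have hpos (i : Fin n) : 0 < a (i + 1) := (Nat.succ_pos _).trans_le (ha i)
  intro u v huv
  obtain rfl | ⟨i, j, rfl⟩ := u.eq_hub_or_eq_leg <;>
  obtain rfl | ⟨i', j', rfl⟩ := v.eq_hub_or_eq_leg
  · rfl
  · exact absurd huv (colorCode_hub_ne_colorCode_leg hpos ht i' j')
  · exact absurd huv.symm (colorCode_hub_ne_colorCode_leg hpos ht i j)
  · obtain ⟨htype, hj⟩ :=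
      type_eq_and_val_eq_of_colorCode_eq ha ht fun x => congrFun huv (.inl x)
    have hdigit : δ i = δ i' :=
      funext fun q => digit_eq_of_colorCode_eq ha hj (congrFun huv (.inr q))
    exact leg_eq_leg_iff.2 ⟨hinj (Prod.ext htype hdigit), hj⟩

lemma exists_injective_type_digits (hn : 2 ≤ n) (hnm : n ≤ 4 * 3 ^ m) :
    ∃ (t : Fin n → Fin 4) (δ : Fin n → Fin m → Fin 3),
      (∀ x ≠ 0, ∃ i, oddColor (t i) = x) ∧ Function.Injective fun i => (t i, δ i) := by
  let e : Fin (3 ^ m * 4) ≃ Fin (3 ^ m) × Fin 4 := finProdFinEquiv.symm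
  let ι : Fin n ↪ Fin (3 ^ m * 4) := Fin.castLEEmb (by omega)
  refine ⟨fun i => (e (ι i)).2, fun i => finFunctionFinEquiv.symm (e (ι i)).1, fun x hx => ?_,
    fun i i' h => ?_⟩
  · obtain rfl | rfl : x = 1 ∨ x = 2 := by
      revert x
      decide
    · exact ⟨⟨0, by omega⟩, rfl⟩
    · exact ⟨⟨1, by omega⟩, rfl⟩
  · obtain ⟨htype, hdigits⟩ := Prod.ext_iff.1 h
    exact ι.injective (e.injective (Prod.ext (finFunctionFinEquiv.symm.injective hdigits) htype))

lemma locatingChromaticNumber_palm_le (hn : 2 ≤ n) (hnm : n ≤ 4 * 3 ^ m)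
    (ha : ∀ i : Fin n, 4 * m + 3 ≤ a (i + 1)) : locatingChromaticNumber (Palm n a) ≤ m + 3 := by
  obtain ⟨t, δ, ht, hinj⟩ := exists_injective_type_digits hn hnm
  simpa [add_comm] using locatingChromaticNumber_le_card (palmColoring t δ)
    (fun _ _ => palmColoring_ne_of_adj) (injective_colorCode_palmColoring ha ht hinj)

end PalmColoring

lemma le_four_mul_three_pow_of_ceil_logb_le {n k : ℕ} (hn : 2 ≤ n)
    (hk : ⌈Real.logb 3 ((n : ℝ) / 4)⌉ + 3 ≤ (k : ℤ)) : ∃ m, k = m + 3 ∧ n ≤ 4 * 3 ^ m := by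
  have hn' : (2 : ℝ) ≤ n := by exact_mod_cast hn
  have hceil : -1 < ⌈Real.logb 3 ((n : ℝ) / 4)⌉ := by
    rw [Int.lt_ceil, Real.lt_logb_iff_rpow_lt (by norm_num) (by positivity)]
    norm_num
    linarith
  obtain ⟨m, rfl⟩ : ∃ m, k = m + 3 := ⟨k - 3, by omega⟩
  have hlog : Real.logb 3 ((n : ℝ) / 4) ≤ (m : ℕ) := by
    have : ⌈Real.logb 3 ((n : ℝ) / 4)⌉ ≤ (m : ℤ) := by omega
    exact_mod_cast Int.ceil_le.1 this
  rw [Real.logb_le_iff_le_rpow (by norm_num) (by positivity), Real.rpow_natCast,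
    div_le_iff₀' (by norm_num)] at hlog
  exact ⟨m, rfl, by exact_mod_cast hlog⟩

/-- For every `n ≥ 2` and every integer `k` with
`⌈log_3(n/4)⌉ + 3 ≤ k ≤ n + 1`, there is a palm `G = S_n(a_1, …, a_n)` with `χ_L(G) = k`. -/
theorem exists_palm_locatingChromaticNumber_eq (n : ℕ) (hn : 2 ≤ n) (k : ℕ)
    (hk₁ : ⌈Real.logb 3 ((n : ℝ) / 4)⌉ + 3 ≤ (k : ℤ)) (hk₂ : k ≤ n + 1) :
    ∃ a : ℕ → ℕ, (∀ i, 1 ≤ i → i ≤ n → 1 ≤ a i) ∧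
      locatingChromaticNumber (Palm n a) = k := by
  obtain ⟨m, rfl, hnm⟩ := le_four_mul_three_pow_of_ceil_logb_le hn hk₁
  let a (s i : ℕ) : ℕ := if i ≤ s then 1 else 4 * m + 3
  have hlong : locatingChromaticNumber (Palm n (a 0)) ≤ m + 3 :=
    locatingChromaticNumber_palm_le hn hnm fun i => by simp [a]
  have hstar : n + 1 ≤ locatingChromaticNumber (Palm n (a n)) :=
    Palm.add_one_le_locatingChromaticNumber_of_star fun i => if_pos i.2
  have hstep (s : ℕ) (hs : s < n) :
      locatingChromaticNumber (Palm n (a (s + 1))) ≤ locatingChromaticNumber (Palm n (a s)) + 1 :=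
    Palm.locatingChromaticNumber_le_add_one_of_shorten ⟨s, hs⟩ (by simp [a]) (by simp [a])
      fun i hi => by grind
  obtain ⟨s, hs⟩ := exists_eq_of_succ_le_add_one
    (f := fun s => locatingChromaticNumber (Palm n (a s))) hstep hlong (hk₂.trans hstar)
  exact ⟨a s, fun i _ _ => by grind, hs⟩
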